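/- Let G be the parallel composition of r ≥ 2 paths of even lengths k_1,...,k_r, and let X be the projective toric subset parameterized by G. Then reg(G) ≤ (k_1/2 + ... + k_r/2 − 1)(q−2). -/

import Mathlib

open MvPolynomial

/-- A finite multigraph without loops: each edge `e` has two distinct endpoints
`fst e` and `snd e`.  Multiple edges with the same endpoints are allowed. -/
structure Multigraph (V E : Type) : Type where
  fst : E → V
  snd : E → V
  ne : ∀ e, fst e ≠ snd e

namespace Multigraph

variable {V E : Type}

/-- Vertex `v` is an endpoint of the edge `e`. -/
def Incident (G : Multigraph V E) (v : V) (e : E) : Prop :=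
  G.fst e = v ∨ G.snd e = v

instance (G : Multigraph V E) [DecidableEq V] (v : V) : DecidablePred (G.Incident v) :=
  fun e => inferInstanceAs (Decidable (G.fst e = v ∨ G.snd e = v))

/-- The degree of a vertex: the number of edges incident to it. -/
noncomputable def degree (G : Multigraph V E) (v : V) : ℕ :=
  Nat.card {e : E // G.Incident v e}

/-- The graph has no isolated vertices. -/
def NoIsolated (G : Multigraph V E) : Prop :=
  ∀ v : V, ∃ e : E, G.Incident v e

variable (K : Type) [Field K] [Fintype K]

/-- The point of the affine torus associated with an assignment `x` of nonzero
scalars to the vertices: its coordinate at an edge `e = {v,w}` is `x v * x w`. -/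
def point (G : Multigraph V E) (x : V → Kˣ) : E → K :=
  fun e => (x (G.fst e) : K) * (x (G.snd e) : K)

/-- The projective toric subset `X` parameterized by `G`, realized as the set of
`Kˣ`-orbits (i.e. projective points) of the points `G.point K x`, `x : V → Kˣ`. -/
def toricSet (G : Multigraph V E) : Set (Set (E → K)) :=
  Set.range fun x : V → Kˣ => MulAction.orbit Kˣ (G.point K x)

/-- The vanishing ideal `I(X)` of the projective toric subset parameterized by `G`:
the ideal of all polynomials each of whose homogeneous components vanishes at the
point `G.point K x` for every `x : V → Kˣ`. -/
def vanishingIdeal (G : Multigraph V E) : Ideal (MvPolynomial E K) where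
  carrier := {f | ∀ (x : V → Kˣ) (d : ℕ), eval (G.point K x) (homogeneousComponent d f) = 0}
  zero_mem' := by intro x d; simp
  add_mem' := by
    intro a b ha hb x d
    rw [map_add, map_add, ha x d, hb x d, add_zero]
  smul_mem' := by
    intro c f hf x n
    rw [smul_eq_mul, ← sum_homogeneousComponent f, Finset.mul_sum, map_sum, map_sum]
    refine Finset.sum_eq_zero fun d _ => ?_
    nth_rewrite 1 [← sum_homogeneousComponent c]
    rw [Finset.sum_mul, map_sum, map_sum]
    refine Finset.sum_eq_zero fun e _ => ?_
    have h1 : (homogeneousComponent e c * homogeneousComponent d f).IsHomogeneous (e + d) :=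
      (homogeneousComponent_isHomogeneous e c).mul (homogeneousComponent_isHomogeneous d f)
    rw [homogeneousComponent_of_mem ((mem_homogeneousSubmodule _ _).mpr h1)]
    split_ifs
    · rw [map_mul, hf x d, mul_zero]
    · simp

/-- The Hilbert function of `S/I(X)`: the dimension over `K` of the degree-`d`
homogeneous component of the quotient, realized as the image of the space of
degree-`d` homogeneous polynomials in the quotient. -/
noncomputable def hilbert (G : Multigraph V E) (d : ℕ) : ℕ :=
  Module.finrank K
    ((homogeneousSubmodule E K d).map (Ideal.Quotient.mkₐ K (G.vanishingIdeal K)).toLinearMap)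

/-- The regularity `reg G`: the least `d` such that the Hilbert function of `S/I(X)`
at `d` equals the number of points of `X`. -/
noncomputable def reg (G : Multigraph V E) : ℕ :=
  sInf {d : ℕ | G.hilbert K d = (G.toricSet K).ncard}

/-- The graph obtained from `G` by deleting a vertex `v` and all edges incident
to it. -/
def deleteVert (G : Multigraph V E) (v : V) :
    Multigraph {w : V // w ≠ v} {e : E // ¬ G.Incident v e} where
  fst e := ⟨G.fst e.1, fun h => e.2 (Or.inl h)⟩
  snd e := ⟨G.snd e.1, fun h => e.2 (Or.inr h)⟩
  ne e h := G.ne e.1 (congrArg Subtype.val h)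

/-- The graph obtained from `G` by identifying the vertex `v₂` with the vertex `v₁`:
the edges are the same, and every endpoint equal to `v₂` is replaced by `v₁`.
This requires that `{v₁, v₂}` is a non-edge of `G`, so that no loops are created. -/
def identifyVert [DecidableEq V] (G : Multigraph V E) (v₁ v₂ : V) (h12 : v₁ ≠ v₂)
    (h : ∀ e, ¬ (G.Incident v₁ e ∧ G.Incident v₂ e)) :
    Multigraph {w : V // w ≠ v₂} E where
  fst e := ⟨if G.fst e = v₂ then v₁ else G.fst e, by split_ifs with hh; exacts [h12, hh]⟩
  snd e := ⟨if G.snd e = v₂ then v₁ else G.snd e, by split_ifs with hh; exacts [h12, hh]⟩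
  ne := by
    intro e heq
    rw [Subtype.ext_iff] at heq
    simp only at heq
    split_ifs at heq with h1 h2 h2
    · exact G.ne e (h1.trans h2.symm)
    · exact h e ⟨Or.inr heq.symm, Or.inl h1⟩
    · exact h e ⟨Or.inl heq, Or.inr h2⟩
    · exact G.ne e heq

/-- The subgraph of `G` determined by a set `A` of edges of `G`, together with all
endpoints of those edges (so it has no isolated vertices). -/
def subgraph [DecidableEq V] (G : Multigraph V E) (A : Finset E) :
    Multigraph {v : V // ∃ e ∈ A, G.Incident v e} {e : E // e ∈ A} where
  fst e := ⟨G.fst e.1, e.1, e.2, Or.inl rfl⟩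
  snd e := ⟨G.snd e.1, e.1, e.2, Or.inr rfl⟩
  ne e h := G.ne e.1 (congrArg Subtype.val h)

end Multigraph

/-- The vertex of the parallel composition of paths of lengths `k i` lying on the
`i`-th path at distance `j` from the common initial vertex:  `j = 0` gives the common
initial vertex, `j = k i` the common terminal vertex, and `0 < j < k i` gives the
`j`-th interior vertex of the `i`-th path. -/
def pcVert {ι : Type} (k : ι → ℕ) (i : ι) (j : ℕ) :
    Bool ⊕ ((i : ι) × Fin (k i - 1)) :=
  if h0 : j = 0 then Sum.inl false
  else if h : j < k i then Sum.inr ⟨i, ⟨j - 1, by omega⟩⟩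
  else Sum.inl true

/-- The parallel composition of the family of paths `P i` of lengths `k i` (`i : ι`):
the `i`-th path has `k i` edges indexed by `Fin (k i)`, its `j`-th edge joining the
vertices of the `i`-th path at distances `j` and `j + 1` from the common initial
vertex.  All the initial vertices of the paths are identified to a single vertex and
all the terminal vertices are identified to a single vertex. -/
def parallelComp {ι : Type} (k : ι → ℕ) :
    Multigraph (Bool ⊕ ((i : ι) × Fin (k i - 1))) ((i : ι) × Fin (k i)) where
  fst e := pcVert k e.1 e.2.1
  snd e := pcVert k e.1 (e.2.1 + 1)
  ne := by
    rintro ⟨i, j⟩ h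
    have hj := j.2
    simp only [pcVert] at h
    split_ifs at h <;> simp_all <;> omega

/-- The monomial `f i`: the product of the edges of the `i`-th path of the parallel
composition in odd positions (positions `1, 3, 5, ...`, i.e. indices `0, 2, 4, ...`). -/
noncomputable def oddProd {ι : Type} (K : Type) [Field K] (k : ι → ℕ) (i : ι) :
    MvPolynomial ((i : ι) × Fin (k i)) K :=
  ∏ m : Fin ((k i + 1) / 2), X ⟨i, ⟨2 * m.1, by have := m.2; omega⟩⟩

/-- The monomial `g i`: the product of the edges of the `i`-th path of the parallel
composition in even positions (positions `2, 4, 6, ...`, i.e. indices `1, 3, 5, ...`). -/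
noncomputable def evenProd {ι : Type} (K : Type) [Field K] (k : ι → ℕ) (i : ι) :
    MvPolynomial ((i : ι) × Fin (k i)) K :=
  ∏ m : Fin (k i / 2), X ⟨i, ⟨2 * m.1 + 1, by have := m.2; omega⟩⟩

/-!
A form of degree `d` restricted to `X` is a combination of monomials, and a monomial restricted to
`X` depends on its exponent only modulo `q - 1` and modulo *balanced* weights: those whose sum
around every vertex, and whose total, is zero.  Forms of degree `d + (q - 1)M`, `M` large, separate
the points of `X`, so `HF(d) = |X|` as soon as every exponent of degree `d + (q - 1)M` is equivalent
to one of degree `d`.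

If every edge carries weight `1` in some balanced weight, then, as the shift ranges over all
balanced weights modulo `q - 1`, each coordinate of a shifted exponent is uniformly distributed in
`{0, ..., q - 2}`.  Hence some shift, reduced to least residues, has degree at most `|E|(q - 2)/2`.
Shifting preserves the degree modulo `q - 1`, so for `d = ⌊|E|(q - 2)/2⌋ - (q - 2)` the new degree
cannot exceed `d`, and adding a multiple of `q - 1` to one exponent brings it up to `d`.

In a parallel composition, two paths whose lengths have the same parity form an even cycle, and
alternating signs along that cycle give a balanced weight.
-/

section Forms

variable {R σ : Type*} [CommSemiring R]

lemma eval_smul_of_isHomogeneous {f : MvPolynomial σ R} {d : ℕ} (hf : f.IsHomogeneous d)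
    (c : R) (p : σ → R) : eval (c • p) f = c ^ d * eval p f := by
  rw [eval_eq, eval_eq, Finset.mul_sum]
  refine Finset.sum_congr rfl fun α hα => ?_
  have hdeg : ∑ i ∈ α.support, α i = d := (hf.degree_eq_sum_deg_support hα).symm
  simp only [Pi.smul_apply, smul_eq_mul, mul_pow, Finset.prod_mul_distrib,
    Finset.prod_pow_eq_pow_sum, hdeg]
  ring

lemma exists_isHomogeneous_eval_eq {P : Set (σ → R)} {d d' : ℕ}
    (h : ∀ α : σ →₀ ℕ, α.degree = d' → ∃ β : σ →₀ ℕ, β.degree = d ∧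
      ∀ p ∈ P, eval p (monomial β (1 : R)) = eval p (monomial α 1))
    {f : MvPolynomial σ R} (hf : f.IsHomogeneous d') :
    ∃ g : MvPolynomial σ R, g.IsHomogeneous d ∧ ∀ p ∈ P, eval p g = eval p f := by
  choose β hβdeg hβeval using h
  have hdeg (α : f.support) : α.1.degree = d' := (hf.degree_eq_sum_deg_support α.2).symm
  refine ⟨∑ α : f.support, C (f.coeff α) * monomial (β α (hdeg α)) 1, ?_, fun p hp => ?_⟩
  · exact IsHomogeneous.sum _ _ _ fun α _ => (isHomogeneous_monomial 1 (hβdeg _ _)).C_mul _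
  · calc eval p (∑ α : f.support, C (f.coeff α) * monomial (β α (hdeg α)) 1)
        = ∑ α : f.support, eval p (C (f.coeff α) * monomial (α : σ →₀ ℕ) 1) := by
          simp only [map_sum, map_mul, hβeval _ _ p hp]
      _ = ∑ α ∈ f.support, eval p (monomial α (f.coeff α)) := by
          simp only [C_mul_monomial, mul_one]
          exact Finset.sum_coe_sort f.support fun α => eval p (monomial α (f.coeff α))
      _ = eval p f := by rw [← map_sum, ← f.as_sum]

end Forms

section LineIndicator

variable {K σ : Type*} [Field K] [Fintype K] [Fintype σ]

/-- A form which, at the points `z` with `z i₀ ≠ 0`, is the indicator function of the line spanned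
by `p`, provided `p i₀ ≠ 0`. It exists because `t ^ (q - 1)` is `0` or `1` on a field with `q`
elements; the powers of `X i₀`, which take the value `1`, make it homogeneous. -/
noncomputable def lineIndicator (p : σ → K) (i₀ : σ) : MvPolynomial σ K :=
  ∏ i, (X i₀ ^ (Fintype.card K - 1) -
    (C (p i₀) * X i - C (p i) * X i₀) ^ (Fintype.card K - 1))

lemma isHomogeneous_lineIndicator (p : σ → K) (i₀ : σ) :
    (lineIndicator p i₀).IsHomogeneous ((Fintype.card K - 1) * Fintype.card σ) := by
  have hfactor (i : σ) : (X i₀ ^ (Fintype.card K - 1) -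
      (C (p i₀) * X i - C (p i) * X i₀) ^ (Fintype.card K - 1) :
        MvPolynomial σ K).IsHomogeneous (Fintype.card K - 1) := by
    have hlinear : (C (p i₀) * X i - C (p i) * X i₀ : MvPolynomial σ K).IsHomogeneous 1 :=
      (isHomogeneous_C_mul_X _ _).sub (isHomogeneous_C_mul_X _ _)
    simpa only [one_mul] using
      (isHomogeneous_X_pow i₀ _).sub (hlinear.pow (Fintype.card K - 1))
  simpa [lineIndicator, mul_comm] using
    IsHomogeneous.prod Finset.univ _ _ fun i _ => hfactor i

lemma eval_lineIndicator_of_forall_eq {p z : σ → K} {i₀ : σ} (hz : z i₀ ≠ 0)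
    (h : ∀ i, p i₀ * z i = p i * z i₀) : eval z (lineIndicator p i₀) = 1 := by
  have hexp : Fintype.card K - 1 ≠ 0 := Nat.sub_ne_zero_of_lt Fintype.one_lt_card
  simp [lineIndicator, h, hexp, FiniteField.pow_card_sub_one_eq_one _ hz]

lemma eval_lineIndicator_of_ne {p z : σ → K} {i₀ i : σ} (hz : z i₀ ≠ 0)
    (h : p i₀ * z i ≠ p i * z i₀) : eval z (lineIndicator p i₀) = 0 := by
  rw [lineIndicator, map_prod]
  refine Finset.prod_eq_zero (Finset.mem_univ i) ?_
  simp [FiniteField.pow_card_sub_one_eq_one _ hz,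
    FiniteField.pow_card_sub_one_eq_one _ (sub_ne_zero.mpr h)]

end LineIndicator

section Averaging

lemma card_nsmul_sum_comp_of_surjective {A B M : Type*} [AddGroup A] [AddGroup B]
    [AddCommMonoid M] [Fintype A] [Fintype B] (φ : A →+ B) (hφ : Function.Surjective φ)
    (f : B → M) : Fintype.card B • ∑ a, f (φ a) = Fintype.card A • ∑ b, f b := by
  choose s hs using hφ
  calc Fintype.card B • ∑ a, f (φ a)
      = ∑ b, ∑ a, f (φ (a + s b)) := by
        have hshift (b : B) : ∑ a, f (φ (a + s b)) = ∑ a, f (φ a) :=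
          Equiv.sum_comp (Equiv.addRight (s b)) fun a => f (φ a)
        simp only [hshift, Finset.sum_const, Finset.card_univ]
    _ = ∑ a, ∑ b, f (φ a + b) := by
        rw [Finset.sum_comm]
        simp only [map_add, hs]
    _ = Fintype.card A • ∑ b, f b := by
        have hshift (a : A) : ∑ b, f (φ a + b) = ∑ b, f b :=
          Equiv.sum_comp (Equiv.addLeft (φ a)) f
        simp only [hshift, Finset.sum_const, Finset.card_univ]

lemma exists_add_mul_eq_of_modEq {N n d : ℕ} (hmod : n ≡ d [MOD N]) (hlt : n < d + N) :
    ∃ m, n + N * m = d := by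
  have hle : n ≤ d := by
    by_contra! hdn
    have hgap : N ≤ n - d :=
      Nat.le_of_dvd (Nat.sub_pos_of_lt hdn) ((Nat.modEq_iff_dvd' hdn.le).mp hmod.symm)
    omega
  obtain ⟨m, hm⟩ := (Nat.modEq_iff_dvd' hle).mp hmod
  exact ⟨m, by omega⟩

variable {N : ℕ} [NeZero N]

lemma two_mul_sum_zmod_val : 2 * ∑ c : ZMod N, c.val = N * (N - 1) := by
  obtain ⟨n, rfl⟩ := Nat.exists_eq_succ_of_ne_zero (NeZero.ne N)
  have hsum : ∑ c : ZMod (n + 1), c.val = ∑ i ∈ Finset.range (n + 1), i :=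
    Fin.sum_univ_eq_sum_range (fun i => i) (n + 1)
  rw [hsum, mul_comm, Finset.sum_range_id_mul_two]

lemma two_mul_sum_val_add_of_surjective {A : Type*} [AddGroup A] [Fintype A]
    (φ : A →+ ZMod N) (hφ : Function.Surjective φ) (c : ZMod N) :
    2 * ∑ a, (c + φ a).val = Fintype.card A * (N - 1) := by
  have havg := card_nsmul_sum_comp_of_surjective φ hφ fun b => (c + b).val
  have hshift : ∑ b, (c + b).val = ∑ b : ZMod N, b.val := 
    Equiv.sum_comp (Equiv.addLeft c) ZMod.val
  rw [hshift, ZMod.card, smul_eq_mul, smul_eq_mul] at havg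
  refine Nat.eq_of_mul_eq_mul_left (NeZero.pos N) ?_
  linear_combination 2 * havg + Fintype.card A * two_mul_sum_zmod_val (N := N)

lemma exists_mem_two_mul_sum_val_add_le {E : Type*} [Fintype E]
    (W : Submodule (ZMod N) (E → ZMod N)) (hW : ∀ e, ∃ w ∈ W, w e = 1) (a : E → ZMod N) :
    ∃ w ∈ W, 2 * ∑ e, (a e + w e).val ≤ Fintype.card E * (N - 1) := by
  classical
  have hproj (e : E) : Function.Surjective ((LinearMap.proj e).domRestrict W) := fun c => by
    obtain ⟨w, hw, hwe⟩ := hW e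
    exact ⟨c • ⟨w, hw⟩, by simp [hwe]⟩
  have htotal : ∑ w : W, 2 * ∑ e, (a e + w.1 e).val =
      ∑ _w : W, Fintype.card E * (N - 1) := by
    rw [← Finset.mul_sum, Finset.sum_comm, Finset.mul_sum]
    calc ∑ e, 2 * ∑ w : W, (a e + w.1 e).val
        = ∑ _e : E, Fintype.card W * (N - 1) := Finset.sum_congr rfl fun e _ =>
          two_mul_sum_val_add_of_surjective ((LinearMap.proj e).domRestrict W).toAddMonoidHom
            (hproj e) (a e)
      _ = ∑ _w : W, Fintype.card E * (N - 1) := by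
          simp only [Finset.sum_const, Finset.card_univ, smul_eq_mul]
          ring
  obtain ⟨w, -, hw⟩ := Finset.exists_le_of_sum_le Finset.univ_nonempty htotal.le
  exact ⟨w.1, w.2, hw⟩

lemma exists_degree_eq_sub_mem {E : Type*} [Fintype E] [Nonempty E]
    (W : Submodule (ZMod N) (E → ZMod N)) (hW : ∀ e, ∃ w ∈ W, w e = 1)
    (hW_total : ∀ w ∈ W, ∑ e, w e = 0) {d : ℕ} (hd : Fintype.card E * (N - 1) / 2 ≤ d + (N - 1))
    {α : E →₀ ℕ} (hα : α.degree ≡ d [MOD N]) :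
    ∃ β : E →₀ ℕ, β.degree = d ∧ (fun e => (β e : ZMod N) - α e) ∈ W := by
  classical
  obtain ⟨e₀⟩ := ‹Nonempty E›
  obtain ⟨w, hw, hle⟩ := exists_mem_two_mul_sum_val_add_le W hW fun e => (α e : ZMod N)
  let residue (e : E) : ℕ := (α e + w e : ZMod N).val
  have hmod : ∑ e, residue e ≡ d [MOD N] := by
    rw [← ZMod.natCast_eq_natCast_iff] at hα ⊢
    rw [← hα, Finsupp.degree_eq_sum]
    simp [residue, Finset.sum_add_distrib, hW_total w hw]
  have hlt : ∑ e, residue e < d + N := by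
    have := NeZero.pos N
    change 2 * ∑ e, residue e ≤ _ at hle
    omega
  obtain ⟨m, hm⟩ := exists_add_mul_eq_of_modEq hmod hlt
  refine ⟨Finsupp.equivFunOnFinite.symm residue + Finsupp.single e₀ (N * m), ?_, ?_⟩
  · rw [map_add, Finsupp.degree_single, Finsupp.degree_eq_sum]
    exact hm
  · convert hw using 2 with e
    rw [Finsupp.add_apply, Finsupp.single_apply]
    split_ifs <;> simp [residue]

end Averaging

namespace Multigraph

section Hilbert

variable {V E : Type} {K : Type} [Field K] (G : Multigraph V E)

lemma point_ne_zero (x : V → Kˣ) (e : E) : G.point K x e ≠ 0 :=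
  mul_ne_zero (x _).ne_zero (x _).ne_zero

lemma orbit_point_eq_of_forall_mul_eq {x y : V → Kˣ} {e₀ : E}
    (h : ∀ e, G.point K x e₀ * G.point K y e = G.point K x e * G.point K y e₀) :
    MulAction.orbit Kˣ (G.point K y) = MulAction.orbit Kˣ (G.point K x) := by
  have hx := G.point_ne_zero x e₀
  rw [MulAction.orbit_eq_iff]
  refine ⟨Units.mk0 _ (div_ne_zero (G.point_ne_zero y e₀) hx), funext fun e => ?_⟩
  change G.point K y e₀ / G.point K x e₀ * G.point K x e = G.point K y e
  rw [div_mul_eq_mul_div, div_eq_iff hx]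
  linear_combination -h e

lemma mem_vanishingIdeal_iff_of_isHomogeneous {f : MvPolynomial E K} {d : ℕ}
    (hf : f.IsHomogeneous d) :
    f ∈ G.vanishingIdeal K ↔ ∀ x : V → Kˣ, eval (G.point K x) f = 0 := by
  refine ⟨fun h x => ?_, fun h x n => ?_⟩
  · rw [← homogeneousComponent_eq_self hf]
    exact h x d
  · rw [homogeneousComponent_of_mem ((mem_homogeneousSubmodule _ _).mpr hf)]
    split_ifs
    exacts [h x, map_zero _]

lemma eval_point_eq_zero_of_orbit_eq {f : MvPolynomial E K} {d : ℕ} (hf : f.IsHomogeneous d)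
    {x y : V → Kˣ} (hxy : MulAction.orbit Kˣ (G.point K x) = MulAction.orbit Kˣ (G.point K y))
    (hx : eval (G.point K x) f = 0) : eval (G.point K y) f = 0 := by
  obtain ⟨c, hc⟩ := MulAction.orbit_eq_iff.mp hxy.symm
  change (c : K) • G.point K x = G.point K y at hc
  rw [← hc, eval_smul_of_isHomogeneous hf, hx, mul_zero]

/-- A chosen parameter of a point of `X`. -/
noncomputable def param (y : G.toricSet K) : V → Kˣ := y.2.choose

lemma orbit_point_param (y : G.toricSet K) :
    MulAction.orbit Kˣ (G.point K (G.param y)) = y := y.2.choose_spec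

/-- Evaluation of the forms of degree `d` at the points of `X`. The values depend on the
representatives chosen by `param`, but only up to nonzero factors. -/
noncomputable def evalForms (K : Type) [Field K] (d : ℕ) :
    homogeneousSubmodule E K d →ₗ[K] G.toricSet K → K :=
  LinearMap.pi fun y => (aeval (G.point K (G.param y))).toLinearMap.domRestrict _

lemma evalForms_apply {d : ℕ} (f : homogeneousSubmodule E K d) (y : G.toricSet K) :
    G.evalForms K d f y = eval (G.point K (G.param y)) f.1 := by
  simp [evalForms, aeval_eq_eval]

lemma mem_ker_evalForms_iff {d : ℕ} (f : homogeneousSubmodule E K d) :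
    f ∈ LinearMap.ker (G.evalForms K d) ↔ f.1 ∈ G.vanishingIdeal K := by
  have hf : f.1.IsHomogeneous d := (mem_homogeneousSubmodule _ _).mp f.2
  rw [LinearMap.mem_ker, G.mem_vanishingIdeal_iff_of_isHomogeneous hf, funext_iff]
  simp only [evalForms_apply, Pi.zero_apply]
  exact ⟨fun h x => G.eval_point_eq_zero_of_orbit_eq hf
    (G.orbit_point_param ⟨_, x, rfl⟩) (h ⟨_, x, rfl⟩), fun h y => h _⟩

lemma hilbert_eq_finrank_range_evalForms (d : ℕ) :
    G.hilbert K d = Module.finrank K (LinearMap.range (G.evalForms K d)) := by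
  set toQuot := (Ideal.Quotient.mkₐ K (G.vanishingIdeal K)).toLinearMap.domRestrict
    (homogeneousSubmodule E K d) with htoQuot
  have hker : LinearMap.ker toQuot = LinearMap.ker (G.evalForms K d) := by
    ext f
    rw [mem_ker_evalForms_iff, LinearMap.mem_ker, ← Ideal.Quotient.eq_zero_iff_mem]
    rfl
  rw [hilbert, ← LinearMap.range_domRestrict, ← htoQuot, ← toQuot.quotKerEquivRange.finrank_eq,
    hker, (G.evalForms K d).quotKerEquivRange.finrank_eq]

lemma hilbert_eq_ncard_of_forall_exists_indicator [Finite K] [Finite E] {d : ℕ}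
    (h : ∀ x : V → Kˣ, ∃ f : MvPolynomial E K, f.IsHomogeneous d ∧ eval (G.point K x) f ≠ 0 ∧
      ∀ y : V → Kˣ, MulAction.orbit Kˣ (G.point K y) ≠ MulAction.orbit Kˣ (G.point K x) →
        eval (G.point K y) f = 0) :
    G.hilbert K d = (G.toricSet K).ncard := by
  classical
  have : Fintype (G.toricSet K) := Fintype.ofFinite _
  have hrange : LinearMap.range (G.evalForms K d) = ⊤ := by
    rw [eq_top_iff, ← (Pi.basisFun K (G.toricSet K)).span_eq, Submodule.span_le]
    rintro _ ⟨y, rfl⟩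
    obtain ⟨f, hf, hfy, hfz⟩ := h (G.param y)
    let F : homogeneousSubmodule E K d := ⟨f, (mem_homogeneousSubmodule _ _).mpr hf⟩
    refine ⟨(eval (G.point K (G.param y)) f)⁻¹ • F, funext fun z => ?_⟩
    rw [map_smul, Pi.smul_apply, evalForms_apply, Pi.basisFun_apply, smul_eq_mul]
    obtain rfl | hzy := eq_or_ne z y
    · rw [Pi.single_eq_same, inv_mul_cancel₀ hfy]
    · have horbit : MulAction.orbit Kˣ (G.point K (G.param z)) ≠
          MulAction.orbit Kˣ (G.point K (G.param y)) := by
        simpa only [orbit_point_param] using Subtype.coe_ne_coe.mpr hzy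
      rw [Pi.single_eq_of_ne hzy, hfz _ horbit, mul_zero]
  rw [hilbert_eq_finrank_range_evalForms, hrange, finrank_top,
    Module.finrank_fintype_fun_eq_card, ← Nat.card_eq_fintype_card, Nat.card_coe_set_eq]

lemma hilbert_eq_ncard_of_forall_exists_degree_eq [Fintype K] [Finite E] [Nonempty E] {d : ℕ}
    (h : ∀ α : E →₀ ℕ, α.degree ≡ d [MOD Fintype.card K - 1] →
      ∃ β : E →₀ ℕ, β.degree = d ∧ ∀ x : V → Kˣ,
        eval (G.point K x) (monomial β (1 : K)) = eval (G.point K x) (monomial α 1)) :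
    G.hilbert K d = (G.toricSet K).ncard := by
  have : Fintype E := Fintype.ofFinite E
  obtain ⟨e₀⟩ := ‹Nonempty E›
  refine G.hilbert_eq_ncard_of_forall_exists_indicator fun x => ?_
  have hform := (isHomogeneous_X_pow (R := K) e₀ d).mul
    (isHomogeneous_lineIndicator (G.point K x) e₀)
  obtain ⟨g, hg, hgeval⟩ := exists_isHomogeneous_eval_eq (P := Set.range (G.point K))
    (fun α hα => by simpa only [Set.forall_mem_range] using h α (by simp [hα])) hform
  simp only [Set.forall_mem_range, map_mul, map_pow, eval_X] at hgeval
  refine ⟨g, hg, ?_, fun y hy => ?_⟩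
  · rw [hgeval, eval_lineIndicator_of_forall_eq (G.point_ne_zero x e₀) fun e => mul_comm _ _,
      mul_one]
    exact pow_ne_zero _ (G.point_ne_zero x e₀)
  · obtain ⟨e, he⟩ := not_forall.mp (mt G.orbit_point_eq_of_forall_mul_eq hy)
    rw [hgeval, eval_lineIndicator_of_ne (G.point_ne_zero y e₀) he, mul_zero]

end Hilbert

section Balanced

variable {V E : Type} [Fintype E] (G : Multigraph V E)

/-- The balanced edge weights with values in `R`: those whose sum over the edges at each vertex is
zero, and whose total is zero. The vertex condition is stated dually, by pairing with all functions
`y` on the vertices. -/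
def balancedWeights (R : Type*) [CommRing R] : Submodule R (E → R) where
  carrier := {w | (∀ y : V → R, ∑ e, w e * (y (G.fst e) + y (G.snd e)) = 0) ∧ ∑ e, w e = 0}
  zero_mem' := by simp
  add_mem' := by
    rintro w w' ⟨hw, hw'⟩ ⟨hv, hv'⟩
    simp [add_mul, Finset.sum_add_distrib, hw, hw', hv, hv']
  smul_mem' := by
    rintro c w ⟨hw, hw'⟩
    simp [mul_assoc, ← Finset.mul_sum, hw, hw']

variable {K : Type} [Field K]

lemma eval_point_monomial (x : V → Kˣ) (α : E →₀ ℕ) :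
    eval (G.point K x) (monomial α (1 : K)) =
      ((∏ e, (x (G.fst e) * x (G.snd e)) ^ α e : Kˣ) : K) := by
  rw [eval_monomial, one_mul, Finsupp.prod_fintype _ _ fun _ => pow_zero _]
  simp [point]

-- Writing all coordinates as powers of one generator of `Kˣ` makes the values of monomials
-- linear in their exponents modulo `q - 1`.
lemma eval_point_monomial_eq_of_sub_mem_balancedWeights [Fintype K] {α β : E →₀ ℕ}
    (h : (fun e => (β e : ZMod (Fintype.card K - 1)) - α e) ∈
      G.balancedWeights (ZMod (Fintype.card K - 1))) (x : V → Kˣ) :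
    eval (G.point K x) (monomial β (1 : K)) = eval (G.point K x) (monomial α 1) := by
  obtain ⟨g, hg⟩ := IsCyclic.exists_monoid_generator (α := Kˣ)
  choose n hn using fun v => Submonoid.mem_powers_iff _ _ |>.mp (hg (x v))
  have hprod (γ : E →₀ ℕ) : ∏ e, (x (G.fst e) * x (G.snd e)) ^ γ e =
      g ^ ∑ e, γ e * (n (G.fst e) + n (G.snd e)) := by
    rw [← Finset.prod_pow_eq_pow_sum]
    exact Finset.prod_congr rfl fun e _ => by rw [← hn, ← hn, ← pow_add, ← pow_mul, mul_comm]
  have hg_pow : g ^ (Fintype.card K - 1) = 1 := by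
    simp [Units.ext_iff, FiniteField.pow_card_sub_one_eq_one]
  rw [eval_point_monomial, eval_point_monomial, hprod, hprod]
  refine congrArg Units.val (pow_eq_pow_of_modEq ?_ hg_pow)
  rw [← ZMod.natCast_eq_natCast_iff, ← sub_eq_zero]
  simpa [sub_mul, Finset.sum_sub_distrib] using h.1 fun v => (n v : ZMod (Fintype.card K - 1))

theorem reg_le_of_forall_exists_mem_balancedWeights [Fintype K] [Nonempty E]
    (hG : ∀ e, ∃ w ∈ G.balancedWeights (ZMod (Fintype.card K - 1)), w e = 1) :
    G.reg K ≤ Fintype.card E * (Fintype.card K - 2) / 2 - (Fintype.card K - 2) := by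
  have hcard : 1 < Fintype.card K := Fintype.one_lt_card
  have : NeZero (Fintype.card K - 1) := ⟨by omega⟩
  refine Nat.sInf_le <| G.hilbert_eq_ncard_of_forall_exists_degree_eq fun α hα => ?_
  obtain ⟨β, hβ, hβα⟩ := exists_degree_eq_sub_mem _ hG (fun w hw => hw.2)
    (by rw [show Fintype.card K - 1 - 1 = Fintype.card K - 2 by omega]; omega) hα
  exact ⟨β, hβ, G.eval_point_monomial_eq_of_sub_mem_balancedWeights hβα⟩

end Balanced

end Multigraph

section ParallelComp

lemma sum_range_neg_one_pow_mul_add {R : Type*} [CommRing R] (y : ℕ → R) (n : ℕ) :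
    ∑ j ∈ Finset.range n, (-1) ^ j * (y j + y (j + 1)) = y 0 - (-1) ^ n * y n := by
  induction n with
  | zero => simp
  | succ n ih =>
    rw [Finset.sum_range_succ, ih]
    ring

variable {ι : Type} {k : ι → ℕ}

lemma pcVert_zero (i : ι) : pcVert k i 0 = Sum.inl false := rfl

lemma pcVert_length {i : ι} (hi : 0 < k i) : pcVert k i (k i) = Sum.inl true := by
  simp [pcVert, hi.ne']

variable [Fintype ι] {R : Type*} [CommRing R]

-- On the even cycle formed by the two paths this weight alternates between `1` and `-1`.
lemma alternating_mem_balancedWeights_parallelComp [DecidableEq ι] (hk : ∀ i, 0 < k i) {i i' : ι}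
    (hparity : Even (k i') ↔ Even (k i)) :
    (fun e => (Pi.single i 1 - Pi.single i' 1 : ι → R) e.1 * (-1) ^ (e.2 : ℕ)) ∈
      (parallelComp k).balancedWeights R := by
  have hsum (F : (l : ι) → Fin (k l) → R) :
      ∑ e : (l : ι) × Fin (k l), (Pi.single i 1 - Pi.single i' 1 : ι → R) e.1 * F e.1 e.2 =
        ∑ j, F i j - ∑ j, F i' j := by
    simp [Fintype.sum_sigma, sub_mul, Finset.sum_sub_distrib, Pi.single_apply]
  refine ⟨fun y => ?_, ?_⟩
  · have hpath (l : ι) : ∑ j : Fin (k l), (-1 : R) ^ (j : ℕ) *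
        (y (pcVert k l j) + y (pcVert k l (j + 1))) =
          y (Sum.inl false) - (-1) ^ k l * y (Sum.inl true) := by
      rw [Fin.sum_univ_eq_sum_range
          (fun j => (-1 : R) ^ j * (y (pcVert k l j) + y (pcVert k l (j + 1)))),
        sum_range_neg_one_pow_mul_add (fun j => y (pcVert k l j)), pcVert_zero,
        pcVert_length (hk l)]
    simp only [mul_assoc]
    refine (hsum fun l j => (-1) ^ (j : ℕ) *
      (y (pcVert k l j) + y (pcVert k l (j + 1)))).trans ?_
    rw [hpath, hpath, neg_one_pow_congr hparity, sub_self]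
  · rw [hsum fun l j => (-1) ^ (j : ℕ)]
    simp only [Fin.sum_univ_eq_sum_range (fun j => (-1 : R) ^ j), neg_one_geom_sum, hparity,
      sub_self]

lemma exists_mem_balancedWeights_parallelComp (hk : ∀ i, 0 < k i)
    (hparity : ∀ i, ∃ i' ≠ i, Even (k i') ↔ Even (k i)) (e : (i : ι) × Fin (k i)) :
    ∃ w ∈ (parallelComp k).balancedWeights R, w e = 1 := by
  classical
  obtain ⟨i', hne, hi'⟩ := hparity e.1
  refine ⟨_, Submodule.smul_mem _ ((-1) ^ (e.2 : ℕ))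
    (alternating_mem_balancedWeights_parallelComp hk hi'), ?_⟩
  simp [Pi.single_apply, hne.symm, ← mul_pow]

end ParallelComp

theorem reg_parallelComp_even_upper_bound_general
    (K : Type) [Field K] [Fintype K] {ι : Type} [Fintype ι] [Nonempty ι] (k : ι → ℕ)
    (hk : ∀ i, 0 < k i) (hparity : ∀ i, ∃ i' ≠ i, Even (k i') ↔ Even (k i)) :
    (parallelComp k).reg K ≤
      (∑ i, k i) * (Fintype.card K - 2) / 2 - (Fintype.card K - 2) := by
  have : Nonempty ((i : ι) × Fin (k i)) :=
    ⟨⟨Classical.arbitrary ι, ⟨0, hk _⟩⟩⟩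
  simpa using (parallelComp k).reg_le_of_forall_exists_mem_balancedWeights (K := K)
    (exists_mem_balancedWeights_parallelComp hk hparity)

/-- **Proposition 3.2.**  Let `G` be the parallel composition of `r ≥ 2` paths of even
lengths `k 0, ..., k (r-1)`.  Then `reg G ≤ (k 0/2 + ... + k (r-1)/2 - 1)(q-2)`,
where `q = |K|`. -/
theorem reg_parallelComp_even_upper_bound
    (K : Type) [Field K] [Fintype K] (r : ℕ) (hr : 2 ≤ r)
    (k : Fin r → ℕ) (hk : ∀ i, 0 < k i) (heven : ∀ i, Even (k i)) :
    (parallelComp k).reg K ≤ ((∑ i, k i / 2) - 1) * (Fintype.card K - 2) := by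
  have : Nontrivial (Fin r) := Fin.nontrivial_iff_two_le.mpr hr
  have hparity (i : Fin r) : ∃ i' ≠ i, Even (k i') ↔ Even (k i) :=
    (exists_ne i).imp fun i' hne => ⟨hne, iff_of_true (heven i') (heven i)⟩
  have htwo (i : Fin r) : 2 ∣ k i := (heven i).two_dvd
  rw [← Nat.sum_div fun i _ => htwo i, Nat.sub_mul, one_mul,
    Nat.div_mul_right_comm (Finset.dvd_sum fun i _ => htwo i)]
  exact reg_parallelComp_even_upper_bound_general K k hk hparity
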